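/- Let q be a real number with 0 < q ≤ 1 and let h, v, u be real numbers with h ≥ 0, v ≥ 0, max(h, v) ≤ u and u ≤ h + v. Then h^q − u^q + v^q ≥ (h − u + v)^q. -/

import Mathlib

/-!
The function `x ↦ x ^ q` is concave on `[0, ∞)` for `0 < q ≤ 1`. With `a = h - u + v`, the
numbers `h` and `v` lie in `[a, u]` and satisfy `h + v = a + u`, so `h` and `v` are convex
combinations of `a` and `u` with the two weights exchanged. Adding the two concavity
inequalities gives `a ^ q + u ^ q ≤ h ^ q + v ^ q`.
-/

open Real

/-- inequality of Aguirre–Escobedo used in Theorem 4.4: for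
`0 < q ≤ 1` and reals `h, v ≥ 0`, `max h v ≤ u ≤ h + v`, one has
`h^q − u^q + v^q ≥ (h − u + v)^q`, where powers are real powers. -/
theorem rpow_sub_add_ineq (q h v u : ℝ) (hq0 : 0 < q) (hq1 : q ≤ 1)
    (hh : 0 ≤ h) (hv : 0 ≤ v) (hmax : max h v ≤ u) (hu : u ≤ h + v) :
    (h - u + v) ^ q ≤ h ^ q - u ^ q + v ^ q := by
  have hhu : h ≤ u := (le_max_left h v).trans hmax
  have hvu : v ≤ u := (le_max_right h v).trans hmax
  obtain ⟨a, ha⟩ : ∃ a, a = h - u + v := ⟨_, rfl⟩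
  rw [← ha]
  rcases (show a ≤ u by linarith).eq_or_lt with hau | hau
  · -- If `a = u`, the four numbers coincide.
    have h1 : h = u := by linarith
    have h2 : v = u := by linarith
    rw [hau, h1, h2]
    linarith
  · have hpos : 0 < u - a := sub_pos.mpr hau
    have hne : u - a ≠ 0 := hpos.ne'
    have hc := Real.concaveOn_rpow hq0.le hq1
    have ha0 : a ∈ Set.Ici (0 : ℝ) := by
      rw [Set.mem_Ici]
      linarith
    have hu0 : u ∈ Set.Ici (0 : ℝ) := hh.trans hhu
    -- `s` and `t` are the barycentric coordinates of `h` in `[a, u]`;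
    -- as `a + u = h + v`, those of `v` are the same with the endpoints swapped.
    obtain ⟨s, hs⟩ : ∃ s, s = (u - h) / (u - a) := ⟨_, rfl⟩
    obtain ⟨t, ht⟩ : ∃ t, t = (u - v) / (u - a) := ⟨_, rfl⟩
    have hs0 : 0 ≤ s := hs ▸ div_nonneg (by linarith) hpos.le
    have ht0 : 0 ≤ t := ht ▸ div_nonneg (by linarith) hpos.le
    have hst : s + t = 1 := by
      rw [hs, ht, ← add_div, div_eq_one_iff_eq hne]
      linarith
    have hsm : s * (u - a) = u - h := by rw [hs, div_mul_cancel₀ _ hne]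
    have e1 : s * a + t * u = h := by linear_combination u * hst - hsm
    have e2 : s * u + t * a = v := by linear_combination a * hst + hsm + ha
    have k1 := hc.2 ha0 hu0 hs0 ht0 hst
    have k2 := hc.2 hu0 ha0 hs0 ht0 hst
    simp only [smul_eq_mul, e1, e2] at k1 k2
    have e3 : s * a ^ q + t * u ^ q + (s * u ^ q + t * a ^ q) = a ^ q + u ^ q := by
      linear_combination (a ^ q + u ^ q) * hst
    linarith
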